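/- Let (F_p)_{p∈P} be a family of C^r-skew-products satisfying assumption (U), fix p₀ in the closure of P, and let Δ(p₀) be the similarity dimension at p₀. Then the map φ : 𝒜^ℤ → ℝ defined by φ(A) := Δ(p₀)·log λ_{p₀,𝔞,α_{-1}}(π_{p₀,α_{-1}𝔞}(σ(α))), where A = α𝔞 is the concatenation of α ∈ 𝒜^{ℤ₋*} and 𝔞 ∈ 𝒜^ℕ and σ(α) denotes the backward sequence obtained from α by deleting its last letter α_{-1}, is Hölder continuous with positive exponent with respect to the metric d∞ on 𝒜^ℤ. -/

import Mathlib

open Filter MeasureTheory Set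
open scoped Topology ENNReal NNReal

noncomputable section

namespace Paper

abbrev E (n : ℕ) : Type := EuclideanSpace ℝ (Fin n)

def cube (N : ℕ) : Set (E N) := {x | ∀ i, x i ∈ Icc (-1:ℝ) 1}

def cubeO (d : ℕ) : Set (E d) := {p | ∀ i, p i ∈ Ioo (-1:ℝ) 1}

variable {A : Type}

def consF (a : A) (𝔞 : ℕ → A) : ℕ → A := fun n =>
  match n with
  | 0 => a
  | Nat.succ k => 𝔞 k

def app : List A → (ℕ → A) → ℕ → A
  | [], 𝔞 => 𝔞
  | a :: w, 𝔞 => app w (consF a 𝔞)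

def trunc (α : ℕ → A) (n : ℕ) : List A := List.ofFn fun i : Fin n => α i

def cyl (w : List A) : Set (ℕ → A) := {α | ∀ i : Fin w.length, α i = w.get i}

variable {N d : ℕ}

def psi (f : E d → (ℕ → A) → E N → E N) (p : E d) : List A → (ℕ → A) → E N → E N
  | [], _ => id
  | a :: w, 𝔞 => f p (consF a 𝔞) ∘ psi f p w (consF a 𝔞)

def dentry (g : E N → E N) (x : E N) (i j : Fin N) : ℝ :=
  fderiv ℝ g x (EuclideanSpace.single j (1:ℝ)) i

def lam (hN : 0 < N) (f : E d → (ℕ → A) → E N → E N) (p : E d) (𝔞 : ℕ → A)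
    (w : List A) (x : E N) : ℝ :=
  |dentry (psi f p w 𝔞) x ⟨0, hN⟩ ⟨0, hN⟩|

def Lam (hN : 0 < N) (f : E d → (ℕ → A) → E N → E N) (p : E d) (𝔞 : ℕ → A)
    (w : List A) : ℝ :=
  sSup ((fun x => lam hN f p 𝔞 w x) '' cube N)

def piProj (f : E d → (ℕ → A) → E N → E N) (p : E d) (𝔞 α : ℕ → A) : E N :=
  limUnder atTop fun n => psi f p (trunc α n) 𝔞 0

def Mop (g : E N → E N) : ℝ := sSup ((fun x => ‖fderiv ℝ g x‖) '' cube N)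

def pressure [Fintype A] (f : E d → (ℕ → A) → E N → E N) (p : E d) (𝔞 : ℕ → A) (s : ℝ) : ℝ :=
  limUnder atTop fun n : ℕ =>
    (1 / n : ℝ) * Real.log (∑ w : Fin n → A, Mop (psi f p (List.ofFn w) 𝔞) ^ s)

structure SkewFamily (A : Type) (N d : ℕ) (r : ℕ∞) where
  f : E d → (ℕ → A) → E N → E N
  X' : Set (E N)
  P' : Set (E d)
  X'_open : IsOpen X'
  X_subset : cube N ⊆ X'
  P'_open : IsOpen P'
  P_subset : closure (cubeO d) ⊆ P'
  smooth : ∀ 𝔞 : ℕ → A, ContDiffOn ℝ r (fun q : E d × E N => f q.1 𝔞 q.2) (P' ×ˢ X')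
  inj : ∀ 𝔞 : ℕ → A, ∀ p ∈ P', Set.InjOn (f p 𝔞) X'
  into : ∀ 𝔞 : ℕ → A, ∀ p ∈ P', f p 𝔞 '' X' ⊆ cube N
  holder0 : ∃ C > (0:ℝ), ∃ θ ∈ Set.Ioo (0:ℝ) 1, ∀ p ∈ P', ∀ (𝔞 𝔟 : ℕ → A) (q : ℕ),
      (∀ i < q, 𝔞 i = 𝔟 i) → ∀ x ∈ X', ‖f p 𝔞 x - f p 𝔟 x‖ ≤ C * θ ^ q
  holder1 : ∃ C > (0:ℝ), ∃ θ ∈ Set.Ioo (0:ℝ) 1, ∀ p ∈ P', ∀ (𝔞 𝔟 : ℕ → A) (q : ℕ),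
      (∀ i < q, 𝔞 i = 𝔟 i) → ∀ x ∈ X',
      ‖fderiv ℝ (f p 𝔞) x - fderiv ℝ (f p 𝔟) x‖ ≤ C * θ ^ q
  cont2 : ∀ p ∈ P', ∀ 𝔞 : ℕ → A, ∀ ε > (0:ℝ), ∃ q : ℕ, ∀ 𝔟 : ℕ → A,
      (∀ i < q, 𝔞 i = 𝔟 i) → ∀ x ∈ X',
      ‖iteratedFDeriv ℝ 2 (f p 𝔞) x - iteratedFDeriv ℝ 2 (f p 𝔟) x‖ ≤ ε

def UnipOn (hN : 0 < N) (f : E d → (ℕ → A) → E N → E N)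
    (P' : Set (E d)) (X' : Set (E N)) : Prop :=
  ∀ p ∈ P', ∀ 𝔞 : ℕ → A, ∀ x ∈ X',
    (∀ i j : Fin N, (i : ℕ) < (j : ℕ) → dentry (f p 𝔞) x i j = 0) ∧
    (∀ i j : Fin N, dentry (f p 𝔞) x i i = dentry (f p 𝔞) x j j) ∧
    0 < |dentry (f p 𝔞) x ⟨0, hN⟩ ⟨0, hN⟩| ∧ |dentry (f p 𝔞) x ⟨0, hN⟩ ⟨0, hN⟩| < 1

def GammaBounds (hN : 0 < N) (f : E d → (ℕ → A) → E N → E N) (γ' γ : ℝ) : Prop :=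
  0 < γ' ∧ γ' < γ ∧ γ < 1 ∧
  ∀ p ∈ closure (cubeO d), ∀ (𝔞 : ℕ → A) (a : A), ∀ x ∈ cube N,
    γ' < lam hN f p 𝔞 [a] x ∧ lam hN f p 𝔞 [a] x < γ

structure ParamPerturb {A : Type} {N d : ℕ} {r : ℕ∞} (hN : 0 < N)
    (S : SkewFamily A N d r) (θ : ℝ) (τ : ℕ) where
  g : E τ → E d → (ℕ → A) → E N → E N
  jointSmooth : ∀ 𝔞 : ℕ → A, ContDiffOn ℝ r
      (fun q : E τ × E d × E N => g q.1 q.2.1 𝔞 q.2.2) ((cubeO τ) ×ˢ S.P' ×ˢ S.X')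
  smooth : ∀ t ∈ cubeO τ, ∀ 𝔞 : ℕ → A, ContDiffOn ℝ r
      (fun q : E d × E N => g t q.1 𝔞 q.2) (S.P' ×ˢ S.X')
  inj : ∀ t ∈ cubeO τ, ∀ 𝔞 : ℕ → A, ∀ p ∈ S.P', Set.InjOn (g t p 𝔞) S.X'
  into : ∀ t ∈ cubeO τ, ∀ 𝔞 : ℕ → A, ∀ p ∈ S.P', g t p 𝔞 '' S.X' ⊆ cube N
  close : ∃ θ' < θ, ∀ t ∈ cubeO τ, ∀ (𝔞 : ℕ → A) (k : ℕ), (k : ℕ∞) ≤ r →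
      ∀ p ∈ S.P', ∀ x ∈ S.X',
      ‖iteratedFDeriv ℝ k (fun q : E d × E N => S.f q.1 𝔞 q.2 - g t q.1 𝔞 q.2) (p, x)‖ ≤ θ'
  unip : ∀ t ∈ cubeO τ, UnipOn hN (g t) S.P' S.X'

def TransAssumption {A : Type} {N d : ℕ} {r : ℕ∞} (hN : 0 < N)
    (S : SkewFamily A N d r) : Prop :=
  ∃ C > (0:ℝ),
    (∀ 𝔞 α β : ℕ → A, α 0 ≠ β 0 → ∀ rr > (0:ℝ),
      volume {p ∈ cubeO d | ‖piProj S.f p 𝔞 α - piProj S.f p 𝔞 β‖ < rr}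
        ≤ ENNReal.ofReal (C * rr ^ N)) ∧
    ∃ θ₀ > (0:ℝ), ∀ θ : ℝ, 0 < θ → θ ≤ θ₀ → ∀ τ : ℕ, 0 < τ →
      ∀ Ft : ParamPerturb hN S θ τ, ∀ t ∈ cubeO τ,
      ∀ 𝔞 α β : ℕ → A, α 0 ≠ β 0 → ∀ rr > (0:ℝ),
        volume {p ∈ cubeO d | ‖piProj (Ft.g t) p 𝔞 α - piProj (Ft.g t) p 𝔞 β‖ < rr}
          ≤ ENNReal.ofReal (C * rr ^ N)

def dens {N : ℕ} (ν : Measure (E N)) (x : E N) : ℝ≥0∞ :=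
  liminf (fun rr : ℝ => ν (Metric.ball x rr) / volume (Metric.ball (0 : E N) rr)) (𝓝[>] (0:ℝ))

end Paper

namespace IFS

open Paper

variable {A : Type}

def psiA (c b : ℝ → A → ℝ) (p : ℝ) : List A → ℝ → ℝ
  | [], x => x
  | a :: w, x => c p a * psiA c b p w x + b p a

def piA (c b : ℝ → A → ℝ) (p : ℝ) (α : ℕ → A) : ℝ :=
  limUnder atTop fun n => psiA c b p (Paper.trunc α n) 0

def LamA (c : ℝ → A → ℝ) (p : ℝ) (w : List A) : ℝ := (w.map fun a => |c p a|).prod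

def IFSHyp (c b : ℝ → A → ℝ) (U : Set ℝ) : Prop :=
  IsOpen U ∧ Icc (-1:ℝ) 1 ⊆ U ∧
  (∀ a : A, ContinuousOn (fun p => c p a) U) ∧
  (∀ a : A, ContinuousOn (fun p => b p a) U) ∧
  (∀ p ∈ U, ∀ a : A, ∀ x ∈ Icc (-1:ℝ) 1, c p a * x + b p a ∈ Ioo (-1:ℝ) 1)

def GammaBoundsA (c : ℝ → A → ℝ) (γ' γ : ℝ) : Prop :=
  0 < γ' ∧ γ' < γ ∧ γ < 1 ∧ ∀ p ∈ Icc (-1:ℝ) 1, ∀ a : A, γ' < |c p a| ∧ |c p a| < γ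

def TransAff (c b : ℝ → A → ℝ) : Prop :=
  ∃ C > (0:ℝ), ∀ α β : ℕ → A, α 0 ≠ β 0 → ∀ rr > (0:ℝ),
    volume {p ∈ Ioo (-1:ℝ) 1 | |piA c b p α - piA c b p β| < rr} ≤ ENNReal.ofReal (C * rr)

def densR (ν : MeasureTheory.Measure ℝ) (x : ℝ) : ℝ≥0∞ :=
  liminf (fun rr : ℝ => ν (Ioo (x - rr) (x + rr)) / ENNReal.ofReal (2 * rr)) (𝓝[>] (0:ℝ))

end IFS

namespace Paper

variable {A : Type} {N d : ℕ}

theorem cube_convex (N : ℕ) : Convex ℝ (cube N) := by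
  intro x hx y hy a b ha hb hab i
  have h := (convex_Icc (-1:ℝ) 1) (hx i) (hy i) ha hb hab
  simpa using h

theorem cube_closed (N : ℕ) : IsClosed (cube N) := by
  have : cube N = ⋂ i, (fun x : E N => x i) ⁻¹' Icc (-1:ℝ) 1 := by
    ext x; simp [cube]
  rw [this]
  refine isClosed_iInter fun i => IsClosed.preimage ?_ isClosed_Icc
  fun_prop

theorem cube_compact (N : ℕ) : IsCompact (cube N) := by
  refine Metric.isCompact_of_isClosed_isBounded (cube_closed N) ?_
  refine (Metric.isBounded_iff_subset_closedBall (0 : E N)).2 ⟨Real.sqrt N, ?_⟩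
  intro x hx
  rw [mem_closedBall_zero_iff, EuclideanSpace.norm_eq]
  apply Real.sqrt_le_sqrt
  calc ∑ i, ‖x i‖ ^ 2 ≤ ∑ i : Fin N, (1:ℝ) := by
        refine Finset.sum_le_sum fun i _ => ?_
        have h := hx i
        have h2 : ‖x i‖ ≤ 1 := by rw [Real.norm_eq_abs]; exact abs_le.2 ⟨h.1, h.2⟩
        have := norm_nonneg (x i)
        nlinarith
    _ = N := by simp

theorem cube_zero (N : ℕ) : (0 : E N) ∈ cube N := by
  intro i; simp

/-- The weighted coordinates. -/
def wT (N : ℕ) (ε : ℝ) : E N →L[ℝ] (Fin N → ℝ) :=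
  ContinuousLinearMap.pi fun i => (ε ^ (i : ℕ)) • (EuclideanSpace.proj i : E N →L[ℝ] ℝ)

theorem wT_apply (N : ℕ) (ε : ℝ) (x : E N) (i : Fin N) : wT N ε x i = ε ^ (i : ℕ) * x i := by
  simp [wT]

theorem wT_anti (N : ℕ) {ε : ℝ} (hε : 0 < ε) : ∃ M > (0:ℝ), ∀ x : E N, ‖x‖ ≤ M * ‖wT N ε x‖ := by
  have hker : LinearMap.ker (wT N ε : E N →ₗ[ℝ] (Fin N → ℝ)) = ⊥ := by
    rw [LinearMap.ker_eq_bot']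
    intro x hx
    ext i
    have h1 : wT N ε x i = 0 := by
      have : wT N ε x = 0 := hx
      rw [this]; rfl
    rw [wT_apply] at h1
    have := pow_pos hε (i : ℕ)
    rcases mul_eq_zero.1 h1 with h | h
    · linarith
    · simpa using h
  obtain ⟨K, hK, hA⟩ := LinearMap.exists_antilipschitzWith (wT N ε : E N →ₗ[ℝ] (Fin N → ℝ)) hker
  refine ⟨K, by exact_mod_cast hK, fun x => ?_⟩
  have := hA.le_mul_dist x 0
  simpa [dist_eq_norm] using this

theorem wT_cube (N : ℕ) {ε : ℝ} (hε : 0 < ε) (hε1 : ε ≤ 1) {x y : E N} (hx : x ∈ cube N)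
    (hy : y ∈ cube N) : ‖wT N ε (x - y)‖ ≤ 2 := by
  rw [pi_norm_le_iff_of_nonneg (by norm_num)]
  intro i
  rw [wT_apply, Real.norm_eq_abs, abs_mul, abs_of_pos (pow_pos hε _)]
  have h1 : ε ^ (i : ℕ) ≤ 1 := pow_le_one₀ hε.le hε1
  have h0 := pow_pos hε (i : ℕ)
  have h2 : |(x - y) i| ≤ 2 := by
    have := hx i; have := hy i
    simp only [PiLp.sub_apply, mem_Icc] at *
    rw [abs_le]; constructor <;> linarith
  have := abs_nonneg ((x - y) i)
  nlinarith

theorem dentry_sub_le {g h : E N → E N} (x y : E N) (i j : Fin N) :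
    |dentry g x i j - dentry h y i j| ≤ ‖fderiv ℝ g x - fderiv ℝ h y‖ := by
  have h1 : dentry g x i j - dentry h y i j
      = ((fderiv ℝ g x - fderiv ℝ h y) (EuclideanSpace.single j (1:ℝ))) i := by
    simp [dentry]
  rw [h1, ← Real.norm_eq_abs]
  refine (PiLp.norm_apply_le _ i).trans ?_
  refine (ContinuousLinearMap.le_opNorm _ _).trans ?_
  simp

theorem dentry_le {g : E N → E N} (x : E N) (i j : Fin N) :
    |dentry g x i j| ≤ ‖fderiv ℝ g x‖ := by
  rw [dentry, ← Real.norm_eq_abs]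
  refine (PiLp.norm_apply_le _ i).trans ?_
  refine (ContinuousLinearMap.le_opNorm _ _).trans ?_
  simp

theorem fderiv_apply_dentry {g : E N → E N} (x v : E N) (i : Fin N) :
    fderiv ℝ g x v i = ∑ j, dentry g x i j * v j := by
  have hv : v = ∑ j, v j • (EuclideanSpace.single j (1:ℝ) : E N) := by
    ext k
    simp [Pi.single_apply]
  conv_lhs => rw [hv]
  simp [dentry, mul_comm]

theorem wT_lin {ε γ K : ℝ} (hε : 0 < ε) (hε1 : ε ≤ 1) (hK : 0 ≤ K) (hγ : 0 ≤ γ)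
    {g : E N → E N} {x : E N} (hlow : ∀ i j : Fin N, (i : ℕ) < (j : ℕ) → dentry g x i j = 0)
    (hdiag : ∀ i : Fin N, |dentry g x i i| ≤ γ) (hb : ‖fderiv ℝ g x‖ ≤ K) (v : E N) :
    ‖wT N ε (fderiv ℝ g x v)‖ ≤ (γ + N * (K * ε)) * ‖wT N ε v‖ := by
  have hV := norm_nonneg (wT N ε v)
  rw [pi_norm_le_iff_of_nonneg (by positivity)]
  intro i
  rw [wT_apply, fderiv_apply_dentry, Finset.mul_sum]
  refine (norm_sum_le _ _).trans ?_
  calc ∑ j, ‖ε ^ (i : ℕ) * (dentry g x i j * v j)‖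
      ≤ ∑ j, ((if i = j then γ else 0) + K * ε) * ‖wT N ε v‖ := by
        refine Finset.sum_le_sum fun j _ => ?_
        have hj : ε ^ (j : ℕ) * |v j| ≤ ‖wT N ε v‖ := by
          have := norm_le_pi_norm (wT N ε v) j
          rwa [wT_apply, Real.norm_eq_abs, abs_mul, abs_of_pos (pow_pos hε _)] at this
        have hi0 := pow_pos hε (i : ℕ)
        have hj0 := pow_pos hε (j : ℕ)
        rw [Real.norm_eq_abs, abs_mul, abs_mul, abs_of_pos hi0]
        rcases lt_trichotomy (i : ℕ) (j : ℕ) with h | h | h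
        · rw [hlow i j h]; simp only [abs_zero, zero_mul, mul_zero]
          split_ifs <;> positivity
        · have hij : i = j := Fin.ext h
          subst hij
          simp only [if_true]
          calc ε ^ (i : ℕ) * (|dentry g x i i| * |v i|)
              = |dentry g x i i| * (ε ^ (i : ℕ) * |v i|) := by ring
            _ ≤ γ * ‖wT N ε v‖ := by gcongr; exact hdiag i
            _ ≤ (γ + K * ε) * ‖wT N ε v‖ := by
                gcongr; have : 0 ≤ K * ε := by positivity
                linarith
        · have hij : i ≠ j := fun e => by subst e; exact lt_irrefl _ h
          simp only [hij, if_false, zero_add]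
          have hpow : ε ^ (i : ℕ) ≤ ε * ε ^ (j : ℕ) := by
            rw [← pow_succ']
            exact pow_le_pow_of_le_one hε.le hε1 h
          calc ε ^ (i : ℕ) * (|dentry g x i j| * |v j|)
              ≤ (ε * ε ^ (j : ℕ)) * (K * |v j|) := by
                gcongr
                exact (dentry_le x i j).trans hb
            _ = K * ε * (ε ^ (j : ℕ) * |v j|) := by ring
            _ ≤ K * ε * ‖wT N ε v‖ := by gcongr
    _ = (γ + N * (K * ε)) * ‖wT N ε v‖ := by
        rw [← Finset.sum_mul, Finset.sum_add_distrib]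
        simp

theorem wT_contract {ε κ : ℝ} {g : E N → E N}
    (hd : ∀ x ∈ cube N, DifferentiableAt ℝ g x)
    (hc : ∀ x ∈ cube N, ∀ v, ‖wT N ε (fderiv ℝ g x v)‖ ≤ κ * ‖wT N ε v‖)
    {x y : E N} (hx : x ∈ cube N) (hy : y ∈ cube N) :
    ‖wT N ε (g x - g y)‖ ≤ κ * ‖wT N ε (x - y)‖ := by
  have hmem : ∀ t ∈ Icc (0:ℝ) 1, y + t • (x - y) ∈ cube N := fun t ht =>
    (cube_convex N).add_smul_sub_mem hy hx ht
  have hder : ∀ t ∈ Icc (0:ℝ) 1, HasDerivWithinAt (fun t : ℝ => wT N ε (g (y + t • (x - y))))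
      (wT N ε (fderiv ℝ g (y + t • (x - y)) (x - y))) (Icc 0 1) t := by
    intro t ht
    have h1 : HasDerivAt (fun t : ℝ => y + t • (x - y)) (x - y) t := by
      simpa using ((hasDerivAt_id t).smul_const (x - y)).const_add y
    have h2 := (hd _ (hmem t ht)).hasFDerivAt.comp_hasDerivAt t h1
    exact ((wT N ε).hasFDerivAt.comp_hasDerivAt t h2).hasDerivWithinAt
  have := norm_image_sub_le_of_norm_deriv_le_segment_01' (C := κ * ‖wT N ε (x - y)‖) hder
    (fun t ht => hc _ (hmem t ⟨ht.1, ht.2.le⟩) _)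
  simpa [map_sub] using this

theorem consF_eta (𝔞 : ℕ → A) : consF (𝔞 0) (fun i => 𝔞 (i + 1)) = 𝔞 := by
  funext n; cases n <;> rfl

theorem consF_agree {a : A} {𝔞 𝔟 : ℕ → A} {q : ℕ} (h : ∀ i < q, 𝔞 i = 𝔟 i) :
    ∀ i < q + 1, consF a 𝔞 i = consF a 𝔟 i := by
  intro i hi
  cases i with
  | zero => rfl
  | succ k => exact h k (by omega)

theorem psi_trunc_succ (f : E d → (ℕ → A) → E N → E N) (p : E d) (𝔞 α : ℕ → A) (n : ℕ) (x : E N) :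
    psi f p (trunc α (n + 1)) 𝔞 x
      = f p (consF (α 0) 𝔞) (psi f p (trunc (fun i => α (i + 1)) n) (consF (α 0) 𝔞) x) := by
  simp [trunc, List.ofFn_succ, psi]

theorem psi_mem {f : E d → (ℕ → A) → E N → E N} {p : E d}
    (hf : ∀ 𝔞, ∀ x ∈ cube N, f p 𝔞 x ∈ cube N) (n : ℕ) : ∀ (𝔞 α : ℕ → A),
    psi f p (trunc α n) 𝔞 0 ∈ cube N := by
  induction n with
  | zero => intro 𝔞 α; simpa [trunc, psi] using cube_zero N
  | succ n ih => intro 𝔞 α; rw [psi_trunc_succ]; exact hf _ _ (ih _ _)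

theorem psi_step {f : E d → (ℕ → A) → E N → E N} {p : E d} {ε κ : ℝ} (hε : 0 < ε) (hε1 : ε ≤ 1)
    (hκ : 0 ≤ κ)
    (hf : ∀ 𝔞, ∀ x ∈ cube N, f p 𝔞 x ∈ cube N)
    (hc : ∀ 𝔞, ∀ x ∈ cube N, ∀ y ∈ cube N,
      ‖wT N ε (f p 𝔞 x - f p 𝔞 y)‖ ≤ κ * ‖wT N ε (x - y)‖) (n : ℕ) : ∀ (𝔞 α : ℕ → A),
    ‖wT N ε (psi f p (trunc α n) 𝔞 0 - psi f p (trunc α (n + 1)) 𝔞 0)‖ ≤ 2 * κ ^ n := by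
  induction n with
  | zero =>
    intro 𝔞 α
    simpa using wT_cube N hε hε1 (psi_mem hf 0 𝔞 α) (psi_mem hf (0 + 1) 𝔞 α)
  | succ n ih =>
    intro 𝔞 α
    rw [psi_trunc_succ, psi_trunc_succ f p 𝔞 α (n + 1)]
    refine (hc _ _ (psi_mem hf _ _ _) _ (psi_mem hf _ _ _)).trans ?_
    calc _ ≤ κ * (2 * κ ^ n) := by gcongr; exact ih _ _
      _ = _ := by ring

theorem piProj_tendsto {f : E d → (ℕ → A) → E N → E N} {p : E d} {ε κ : ℝ} (hε : 0 < ε)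
    (hε1 : ε ≤ 1) (hκ : 0 ≤ κ) (hκ1 : κ < 1)
    (hf : ∀ 𝔞, ∀ x ∈ cube N, f p 𝔞 x ∈ cube N)
    (hc : ∀ 𝔞, ∀ x ∈ cube N, ∀ y ∈ cube N,
      ‖wT N ε (f p 𝔞 x - f p 𝔞 y)‖ ≤ κ * ‖wT N ε (x - y)‖) (𝔞 α : ℕ → A) :
    Tendsto (fun n => psi f p (trunc α n) 𝔞 0) atTop (𝓝 (piProj f p 𝔞 α)) := by
  obtain ⟨M, hM, hMx⟩ := wT_anti N hε
  have hcs : CauchySeq (fun n => psi f p (trunc α n) 𝔞 0) := by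
    refine cauchySeq_of_le_geometric κ (M * 2) hκ1 fun n => ?_
    rw [dist_eq_norm]
    refine (hMx _).trans ?_
    rw [mul_assoc]
    gcongr
    exact psi_step hε hε1 hκ hf hc n 𝔞 α
  exact hcs.tendsto_limUnder

theorem psi_compare {f : E d → (ℕ → A) → E N → E N} {p : E d} {ε κ θ C : ℝ} (hε : 0 < ε)
    (hε1 : ε ≤ 1) (hκ : 0 ≤ κ) (hκ1 : κ < 1) (hθ : 0 ≤ θ) (hθ1 : θ ≤ 1) (hC : 0 ≤ C)
    (hf : ∀ 𝔞, ∀ x ∈ cube N, f p 𝔞 x ∈ cube N)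
    (hc : ∀ 𝔞, ∀ x ∈ cube N, ∀ y ∈ cube N,
      ‖wT N ε (f p 𝔞 x - f p 𝔞 y)‖ ≤ κ * ‖wT N ε (x - y)‖)
    (hh : ∀ (𝔞 𝔟 : ℕ → A) (q : ℕ), (∀ i < q, 𝔞 i = 𝔟 i) → ∀ x ∈ cube N,
      ‖wT N ε (f p 𝔞 x - f p 𝔟 x)‖ ≤ C * θ ^ q) (n : ℕ) :
    ∀ (𝔞 𝔟 α β : ℕ → A) (q m : ℕ), (∀ i < q, 𝔞 i = 𝔟 i) → (∀ i < m, α i = β i) →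
    ‖wT N ε (psi f p (trunc α n) 𝔞 0 - psi f p (trunc β n) 𝔟 0)‖
      ≤ 2 * κ ^ m + C / (1 - κ) * θ ^ q := by
  have h1κ : 0 < 1 - κ := by linarith
  induction n with
  | zero =>
    intro 𝔞 𝔟 α β q m _ _
    simp only [trunc, List.ofFn_zero, psi, id, sub_self, map_zero, norm_zero]
    positivity
  | succ n ih =>
    intro 𝔞 𝔟 α β q m h𝔞 hα
    cases m with
    | zero =>
      have h2 := wT_cube N hε hε1 (psi_mem hf (n + 1) 𝔞 α) (psi_mem hf (n + 1) 𝔟 β)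
      have : 0 ≤ C / (1 - κ) * θ ^ q := by positivity
      simp only [pow_zero]; linarith
    | succ m =>
      have h0 : α 0 = β 0 := hα 0 (by omega)
      rw [psi_trunc_succ, psi_trunc_succ f p 𝔟, ← h0]
      have hag := consF_agree (a := α 0) h𝔞
      have hI := ih (consF (α 0) 𝔞) (consF (α 0) 𝔟) (fun i => α (i + 1)) (fun i => β (i + 1))
        (q + 1) m hag (fun i hi => hα (i + 1) (by omega))
      have hX := psi_mem hf n (consF (α 0) 𝔞) (fun i => α (i + 1))
      have hY := psi_mem hf n (consF (α 0) 𝔟) (fun i => β (i + 1))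
      set X := psi f p (trunc (fun i => α (i + 1)) n) (consF (α 0) 𝔞) 0
      set Y := psi f p (trunc (fun i => β (i + 1)) n) (consF (α 0) 𝔟) 0
      have e : f p (consF (α 0) 𝔞) X - f p (consF (α 0) 𝔟) Y
          = (f p (consF (α 0) 𝔞) X - f p (consF (α 0) 𝔞) Y)
            + (f p (consF (α 0) 𝔞) Y - f p (consF (α 0) 𝔟) Y) := by abel
      rw [e, map_add]
      refine (norm_add_le _ _).trans ?_
      have e1 := hc (consF (α 0) 𝔞) X hX Y hY
      have e2 := hh _ _ _ hag Y hY
      have e3 := mul_le_mul_of_nonneg_left hI hκ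
      have e4 : θ ^ (q + 1) ≤ θ ^ q := pow_le_pow_of_le_one hθ hθ1 (Nat.le_succ q)
      have e5 : κ * (2 * κ ^ m + C / (1 - κ) * θ ^ (q + 1)) + C * θ ^ (q + 1)
          = 2 * κ ^ (m + 1) + C / (1 - κ) * θ ^ (q + 1) := by
        field_simp; ring
      have e6 : C / (1 - κ) * θ ^ (q + 1) ≤ C / (1 - κ) * θ ^ q :=
        mul_le_mul_of_nonneg_left e4 (by positivity)
      linarith

theorem fiber_contDiff {r : ℕ∞} (hr : 2 ≤ r) (S : SkewFamily A N d r) {p : E d} (hp : p ∈ S.P')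
    (𝔞 : ℕ → A) : ContDiffOn ℝ 2 (S.f p 𝔞) S.X' := by
  have h1 : ContDiffOn ℝ 2 (fun q : E d × E N => S.f q.1 𝔞 q.2) (S.P' ×ˢ S.X') :=
    (S.smooth 𝔞).of_le (WithTop.coe_le_coe.2 hr)
  exact h1.comp (contDiff_const.prodMk contDiff_id).contDiffOn (fun x hx => ⟨hp, hx⟩)

theorem fderiv_bound {r : ℕ∞} (hr : 2 ≤ r) (S : SkewFamily A N d r) {p : E d} (hp : p ∈ S.P')
    (𝔞₀ : ℕ → A) : ∃ K ≥ (0:ℝ), ∀ 𝔞, ∀ x ∈ cube N, ‖fderiv ℝ (S.f p 𝔞) x‖ ≤ K := by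
  obtain ⟨C, hC, θ, hθ, hh⟩ := S.holder1
  have hcont : ContinuousOn (fderiv ℝ (S.f p 𝔞₀)) (cube N) :=
    ((fiber_contDiff hr S hp 𝔞₀).continuousOn_fderiv_of_isOpen S.X'_open (by norm_num)).mono
      S.X_subset
  obtain ⟨K, hK⟩ := (cube_compact N).exists_bound_of_continuousOn hcont
  have hK0 : 0 ≤ K := (norm_nonneg _).trans (hK 0 (cube_zero N))
  refine ⟨C + K, by positivity, fun 𝔞 x hx => ?_⟩
  have h1 := hh p hp 𝔞 𝔞₀ 0 (by simp) x (S.X_subset hx)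
  have h2 := hK x hx
  have h3 : fderiv ℝ (S.f p 𝔞) x
    = (fderiv ℝ (S.f p 𝔞) x - fderiv ℝ (S.f p 𝔞₀) x) + fderiv ℝ (S.f p 𝔞₀) x := by abel
  rw [h3]
  refine (norm_add_le _ _).trans ?_
  simp only [pow_zero, mul_one] at h1
  linarith

theorem norm_second (g : E N → E N) (x : E N) :
    ‖fderiv ℝ (fderiv ℝ g) x‖ = ‖iteratedFDeriv ℝ 2 g x‖ := by
  rw [← norm_iteratedFDeriv_one, norm_iteratedFDeriv_fderiv]

theorem second_bound [Finite A] {r : ℕ∞} (hr : 2 ≤ r) (S : SkewFamily A N d r) {p : E d}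
    (hp : p ∈ S.P') :
    ∃ K : ℝ, ∀ 𝔞, ∀ x ∈ cube N, ‖fderiv ℝ (fderiv ℝ (S.f p 𝔞)) x‖ ≤ K := by
  let _ : TopologicalSpace A := ⊥
  have : DiscreteTopology A := ⟨rfl⟩
  have key : ∃ K : ℝ, ∀ 𝔞 ∈ (univ : Set (ℕ → A)), ∀ x ∈ cube N,
      ‖fderiv ℝ (fderiv ℝ (S.f p 𝔞)) x‖ ≤ K := by
    refine isCompact_univ.induction_on
      (p := fun s : Set (ℕ → A) => ∃ K : ℝ, ∀ 𝔞 ∈ s, ∀ x ∈ cube N,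
        ‖fderiv ℝ (fderiv ℝ (S.f p 𝔞)) x‖ ≤ K) ?_ ?_ ?_ ?_
    · exact ⟨0, by simp⟩
    · rintro s t hst ⟨K, hK⟩
      exact ⟨K, fun 𝔞 h => hK 𝔞 (hst h)⟩
    · rintro s t ⟨K, hK⟩ ⟨L, hL⟩
      refine ⟨max K L, ?_⟩
      rintro 𝔞 (h | h) x hx
      · exact (hK 𝔞 h x hx).trans (le_max_left _ _)
      · exact (hL 𝔞 h x hx).trans (le_max_right _ _)
    · intro 𝔞 _
      obtain ⟨q, hq⟩ := S.cont2 p hp 𝔞 1 one_pos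
      have hcont : ContinuousOn (fderiv ℝ (fderiv ℝ (S.f p 𝔞))) (cube N) :=
        ((((fiber_contDiff hr S hp 𝔞).fderiv_of_isOpen (m := 1) S.X'_open
          (by norm_num)).continuousOn_fderiv_of_isOpen S.X'_open (by norm_num))).mono S.X_subset
      obtain ⟨K, hK⟩ : ∃ K : ℝ, ∀ x ∈ cube N, ‖fderiv ℝ (fderiv ℝ (S.f p 𝔞)) x‖ ≤ K :=
        IsCompact.exists_bound_of_continuousOn (E := E N →L[ℝ] E N →L[ℝ] E N)
          (cube_compact N) hcont
      refine ⟨{𝔟 | ∀ i < q, 𝔞 i = 𝔟 i}, mem_nhdsWithin_of_mem_nhds ?_, K + 1, ?_⟩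
      · have ho : IsOpen {𝔟 : ℕ → A | ∀ i < q, 𝔞 i = 𝔟 i} := by
          have : {𝔟 : ℕ → A | ∀ i < q, 𝔞 i = 𝔟 i}
              = ⋂ i ∈ Set.Iio q, (fun 𝔟 : ℕ → A => 𝔟 i) ⁻¹' {𝔞 i} := by
            ext 𝔟; simp [eq_comm]
          rw [this]
          exact (Set.finite_Iio q).isOpen_biInter fun i _ =>
            (isOpen_discrete _).preimage (continuous_apply i)
        exact ho.mem_nhds (fun i _ => rfl)
      · intro 𝔟 h𝔟 x hx
        have h1 := hq 𝔟 h𝔟 x (S.X_subset hx)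
        have h2 := hK x hx
        rw [norm_second] at h2 ⊢
        have h3 := norm_sub_norm_le (iteratedFDeriv ℝ 2 (S.f p 𝔟) x)
          (iteratedFDeriv ℝ 2 (S.f p 𝔞) x)
        rw [norm_sub_rev] at h3
        linarith
  obtain ⟨K, hK⟩ := key
  exact ⟨K, fun 𝔞 => hK 𝔞 (mem_univ _)⟩

theorem fderiv_lip [Finite A] {r : ℕ∞} (hr : 2 ≤ r) (S : SkewFamily A N d r) {p : E d}
    (hp : p ∈ S.P') :
    ∃ K : ℝ, 0 ≤ K ∧ ∀ 𝔞, ∀ x ∈ cube N, ∀ y ∈ cube N,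
      ‖fderiv ℝ (S.f p 𝔞) x - fderiv ℝ (S.f p 𝔞) y‖ ≤ K * ‖x - y‖ := by
  obtain ⟨K, hK⟩ := second_bound hr S hp
  refine ⟨max K 0, le_max_right _ _, fun 𝔞 x hx y hy => ?_⟩
  refine (cube_convex N).norm_image_sub_le_of_norm_fderiv_le (𝕜 := ℝ) (fun z hz => ?_)
    (fun z hz => (hK 𝔞 z hz).trans (le_max_left _ _)) hy hx
  have h1 := (fiber_contDiff hr S hp 𝔞).fderiv_of_isOpen (m := 1) S.X'_open (by norm_num)
  exact (h1.differentiableOn (by norm_num)).differentiableAt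
    (S.X'_open.mem_nhds (S.X_subset hz))

theorem log_lip {c a b : ℝ} (hc : 0 < c) (ha : c ≤ a) (hb : c ≤ b) :
    |Real.log a - Real.log b| ≤ |a - b| / c := by
  have key : ∀ a b : ℝ, c ≤ a → c ≤ b → Real.log a - Real.log b ≤ |a - b| / c := by
    intro a b ha hb
    have ha0 : 0 < a := hc.trans_le ha
    have hb0 : 0 < b := hc.trans_le hb
    rw [← Real.log_div ha0.ne' hb0.ne']
    have h1 := Real.log_le_sub_one_of_pos (div_pos ha0 hb0)
    have h2 : a / b - 1 = (a - b) / b := by field_simp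
    rw [h2] at h1
    refine h1.trans ?_
    have := le_abs_self (a - b)
    gcongr
  rw [abs_le]
  constructor
  · have := key b a hb ha
    rw [abs_sub_comm] at this; linarith
  · exact key a b ha hb


/-- Lemma: the potential defining the Gibbs measure is Hölder with positive exponent. -/
theorem lemma_hol {A : Type} [Fintype A] {N d : ℕ} {r : ℕ∞}
    (hA : 2 ≤ Fintype.card A) (hN : 0 < N) (hd : 0 < d) (hr : 2 ≤ r)
    (S : SkewFamily A N d r)
    (hU : UnipOn hN S.f S.P' S.X')
    (γ' γ : ℝ) (hγ : GammaBounds hN S.f γ' γ)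
    (p₀ : E d) (hp₀ : p₀ ∈ closure (cubeO d))
    (Δp₀ : ℝ) (hΔ0 : 0 ≤ Δp₀)
    (hΔ : ∀ 𝔟 : ℕ → A, pressure S.f p₀ 𝔟 Δp₀ = 0) :
    ∃ C > (0:ℝ), ∃ θ ∈ Set.Ioo (0:ℝ) 1, ∀ (α 𝔞 β 𝔟 : ℕ → A) (q : ℕ),
      (∀ i : ℕ, i < q → 𝔞 i = 𝔟 i) → (∀ i : ℕ, i + 1 < q → α i = β i) →
      |Δp₀ * Real.log (lam hN S.f p₀ 𝔞 [α 0]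
          (piProj S.f p₀ (consF (α 0) 𝔞) fun i => α (i + 1))) -
        Δp₀ * Real.log (lam hN S.f p₀ 𝔟 [β 0]
          (piProj S.f p₀ (consF (β 0) 𝔟) fun i => β (i + 1)))| ≤ C * θ ^ q := by
  classical
  have hne : Nonempty A := Fintype.card_pos_iff.1 (by omega)
  obtain ⟨a₀⟩ := hne
  have hp : p₀ ∈ S.P' := S.P_subset hp₀
  obtain ⟨hγ'0, hγγ, hγ1, hlam⟩ := hγ
  have hγ0 : 0 < γ := hγ'0.trans hγγ
  obtain ⟨K, hK0, hK⟩ := fderiv_bound hr S hp (fun _ => a₀)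
  obtain ⟨L, hL0, hL⟩ := fderiv_lip hr S hp
  obtain ⟨C0, hC0, θ0, hθ0, hh0⟩ := S.holder0
  obtain ⟨C1, hC1, θ1, hθ1, hh1⟩ := S.holder1
  have hNK : 0 ≤ (N:ℝ) * K := by positivity
  obtain ⟨ε, hε, hε1, hεκ⟩ : ∃ ε : ℝ, 0 < ε ∧ ε ≤ 1 ∧ γ + N * (K * ε) < 1 := by
    have h1γ : 0 < 1 - γ := by linarith
    refine ⟨min 1 ((1 - γ) / (2 * (N * K + 1))), by positivity, min_le_left _ _, ?_⟩
    have h1 : min 1 ((1 - γ) / (2 * (N * K + 1))) ≤ (1 - γ) / (2 * (N * K + 1)) := min_le_right _ _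
    have h2 : (N * K) * min 1 ((1 - γ) / (2 * (N * K + 1)))
        ≤ (N * K) * ((1 - γ) / (2 * (N * K + 1))) := mul_le_mul_of_nonneg_left h1 hNK
    have h3 : (N * K) * ((1 - γ) / (2 * (N * K + 1))) < 1 - γ := by
      rw [← mul_div_assoc, div_lt_iff₀ (by positivity)]
      nlinarith
    rw [← mul_assoc]; linarith
  obtain ⟨κ, hκdef⟩ : ∃ κ : ℝ, κ = γ + N * (K * ε) := ⟨_, rfl⟩
  have hκ0 : 0 < κ := by rw [hκdef]; positivity
  have hκ1 : κ < 1 := by rw [hκdef]; exact hεκ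
  -- eigenvalue as an entry
  have hlam_eq : ∀ (𝔞 : ℕ → A) (a : A) (x : E N), lam hN S.f p₀ 𝔞 [a] x
      = |dentry (S.f p₀ (consF a 𝔞)) x ⟨0, hN⟩ ⟨0, hN⟩| := fun 𝔞 a x => rfl
  have hent : ∀ (𝔞 : ℕ → A), ∀ x ∈ cube N, |dentry (S.f p₀ 𝔞) x ⟨0, hN⟩ ⟨0, hN⟩| < γ := by
    intro 𝔞 x hx
    have := (hlam p₀ hp₀ (fun i => 𝔞 (i + 1)) (𝔞 0) x hx).2
    rwa [hlam_eq, consF_eta] at this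
  have hf : ∀ 𝔞 : ℕ → A, ∀ x ∈ cube N, S.f p₀ 𝔞 x ∈ cube N := fun 𝔞 x hx =>
    S.into 𝔞 p₀ hp ⟨x, S.X_subset hx, rfl⟩
  have hc : ∀ 𝔞 : ℕ → A, ∀ x ∈ cube N, ∀ y ∈ cube N,
      ‖wT N ε (S.f p₀ 𝔞 x - S.f p₀ 𝔞 y)‖ ≤ κ * ‖wT N ε (x - y)‖ := by
    intro 𝔞 x hx y hy
    refine wT_contract (fun z hz => ?_) (fun z hz v => ?_) hx hy
    · exact ((fiber_contDiff hr S hp 𝔞).differentiableOn (by norm_num)).differentiableAt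
        (S.X'_open.mem_nhds (S.X_subset hz))
    · rw [hκdef]
      obtain ⟨hlow, hdg, -, -⟩ := hU p₀ hp 𝔞 z (S.X_subset hz)
      refine wT_lin hε hε1 hK0 hγ0.le hlow (fun i => ?_) (hK 𝔞 z hz) v
      rw [hdg i ⟨0, hN⟩]
      exact (hent 𝔞 z hz).le
  have hh : ∀ (𝔞 𝔟 : ℕ → A) (q : ℕ), (∀ i < q, 𝔞 i = 𝔟 i) → ∀ x ∈ cube N,
      ‖wT N ε (S.f p₀ 𝔞 x - S.f p₀ 𝔟 x)‖ ≤ (‖wT N ε‖ * C0) * θ0 ^ q := by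
    intro 𝔞 𝔟 q hq x hx
    refine ((wT N ε).le_opNorm _).trans ?_
    rw [mul_assoc]
    gcongr
    exact hh0 p₀ hp 𝔞 𝔟 q hq x (S.X_subset hx)
  have hten := fun 𝔞 α : ℕ → A => piProj_tendsto hε hε1 hκ0.le hκ1 hf hc 𝔞 α
  have hpi_mem : ∀ 𝔞 α : ℕ → A, piProj S.f p₀ 𝔞 α ∈ cube N := fun 𝔞 α =>
    (cube_closed N).mem_of_tendsto (hten 𝔞 α) (Eventually.of_forall fun n => psi_mem hf n 𝔞 α)
  obtain ⟨M, hM, hMx⟩ := wT_anti N hε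
  obtain ⟨D, hDdef⟩ : ∃ D : ℝ, D = ‖wT N ε‖ * C0 / (1 - κ) := ⟨_, rfl⟩
  have hD0 : 0 ≤ D := by
    have : 0 < 1 - κ := by linarith
    rw [hDdef]; positivity
  have hpi : ∀ (𝔞 𝔟 α β : ℕ → A) (q m : ℕ), (∀ i < q, 𝔞 i = 𝔟 i) → (∀ i < m, α i = β i) →
      ‖piProj S.f p₀ 𝔞 α - piProj S.f p₀ 𝔟 β‖ ≤ M * (2 * κ ^ m + D * θ0 ^ q) := by
    intro 𝔞 𝔟 α β q m h1 h2
    refine le_of_tendsto ((hten 𝔞 α).sub (hten 𝔟 β)).norm (Eventually.of_forall fun n => ?_)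
    refine (hMx _).trans ?_
    gcongr
    rw [hDdef]
    exact psi_compare hε hε1 hκ0.le hκ1 hθ0.1.le hθ0.2.le (by positivity) hf hc hh n
      𝔞 𝔟 α β q m h1 h2
  -- the common rate
  obtain ⟨θ, hθdef⟩ : ∃ θ : ℝ, θ = max κ (max θ0 θ1) := ⟨_, rfl⟩
  have hκθ : κ ≤ θ := by rw [hθdef]; exact le_max_left _ _
  have h0θ : θ0 ≤ θ := by rw [hθdef]; exact (le_max_left _ _).trans (le_max_right _ _)
  have h1θ : θ1 ≤ θ := by rw [hθdef]; exact (le_max_right _ _).trans (le_max_right _ _)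
  have hθpos : 0 < θ := hκ0.trans_le hκθ
  have hθlt : θ < 1 := by rw [hθdef]; exact max_lt hκ1 (max_lt hθ0.2 hθ1.2)
  have hlogb : ∀ (𝔞 𝔟 : ℕ → A) (a b : A), ∀ x ∈ cube N, ∀ y ∈ cube N,
      |Real.log (lam hN S.f p₀ 𝔞 [a] x) - Real.log (lam hN S.f p₀ 𝔟 [b] y)| ≤
        |lam hN S.f p₀ 𝔞 [a] x - lam hN S.f p₀ 𝔟 [b] y| / γ' := fun 𝔞 𝔟 a b x hx y hy =>
    log_lip hγ'0 (hlam p₀ hp₀ 𝔞 a x hx).1.le (hlam p₀ hp₀ 𝔟 b y hy).1.le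
  obtain ⟨B, hBdef⟩ : ∃ B : ℝ, B = C1 + L * (M * (2 + D)) + 1 := ⟨_, rfl⟩
  have hB1 : 1 ≤ B := by
    have : 0 ≤ L * (M * (2 + D)) := by positivity
    rw [hBdef]; linarith
  have hlamd : ∀ (α 𝔞 β 𝔟 : ℕ → A) (q : ℕ),
      (∀ i : ℕ, i < q → 𝔞 i = 𝔟 i) → (∀ i : ℕ, i + 1 < q → α i = β i) →
      |lam hN S.f p₀ 𝔞 [α 0] (piProj S.f p₀ (consF (α 0) 𝔞) fun i => α (i + 1)) -
        lam hN S.f p₀ 𝔟 [β 0] (piProj S.f p₀ (consF (β 0) 𝔟) fun i => β (i + 1))|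
        ≤ B / θ ^ 2 * θ ^ q := by
    intro α 𝔞 β 𝔟 q h𝔞 hα
    have hx := hpi_mem (consF (α 0) 𝔞) fun i => α (i + 1)
    have hy := hpi_mem (consF (β 0) 𝔟) fun i => β (i + 1)
    have hxy := hpi (consF (α 0) 𝔞) (consF (β 0) 𝔟) (fun i => α (i + 1)) (fun i => β (i + 1))
    set x := piProj S.f p₀ (consF (α 0) 𝔞) fun i => α (i + 1)
    set y := piProj S.f p₀ (consF (β 0) 𝔟) fun i => β (i + 1)
    rcases Nat.lt_or_ge q 2 with hq | hq
    · have b1 := hlam p₀ hp₀ 𝔞 (α 0) x hx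
      have b2 := hlam p₀ hp₀ 𝔟 (β 0) y hy
      have h1 : |lam hN S.f p₀ 𝔞 [α 0] x - lam hN S.f p₀ 𝔟 [β 0] y| ≤ 1 := by
        rw [abs_le]; constructor <;> linarith [b1.1, b1.2, b2.1, b2.2]
      refine h1.trans ?_
      have h2 : θ ^ 2 ≤ θ ^ q := pow_le_pow_of_le_one hθpos.le hθlt.le hq.le
      have h3 : 0 < θ ^ 2 := by positivity
      rw [div_mul_eq_mul_div, le_div_iff₀ h3]
      nlinarith
    · obtain ⟨m, rfl⟩ := Nat.exists_eq_add_of_le' hq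
      have hab : α 0 = β 0 := hα 0 (by omega)
      have hag : ∀ i < m + 2, consF (α 0) 𝔞 i = consF (β 0) 𝔟 i := by
        intro i hi
        rw [← hab]
        exact consF_agree h𝔞 i (by omega)
      have hd1 := hxy (m + 2) m hag (fun i hi => hα (i + 1) (by omega))
      rw [hlam_eq, hlam_eq]
      refine (abs_abs_sub_abs_le _ _).trans ((dentry_sub_le _ _ _ _).trans ?_)
      have e1 := hL (consF (α 0) 𝔞) x hx y hy
      have e2 := hh1 p₀ hp _ _ _ hag y (S.X_subset hy)
      have e3 : ‖fderiv ℝ (S.f p₀ (consF (α 0) 𝔞)) x - fderiv ℝ (S.f p₀ (consF (β 0) 𝔟)) y‖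
          ≤ ‖fderiv ℝ (S.f p₀ (consF (α 0) 𝔞)) x - fderiv ℝ (S.f p₀ (consF (α 0) 𝔞)) y‖
          + ‖fderiv ℝ (S.f p₀ (consF (α 0) 𝔞)) y - fderiv ℝ (S.f p₀ (consF (β 0) 𝔟)) y‖ :=
        norm_sub_le_norm_sub_add_norm_sub _ _ _
      have hθm : θ ^ (m + 2) ≤ θ ^ m := pow_le_pow_of_le_one hθpos.le hθlt.le (by omega)
      have f1 : κ ^ m ≤ θ ^ m := by gcongr
      have f2 : θ0 ^ (m + 2) ≤ θ ^ m :=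
        (pow_le_pow_left₀ hθ0.1.le h0θ _).trans hθm
      have f3 : θ1 ^ (m + 2) ≤ θ ^ m :=
        (pow_le_pow_left₀ hθ1.1.le h1θ _).trans hθm
      have e4 : L * ‖x - y‖ ≤ L * (M * (2 * θ ^ m + D * θ ^ m)) := by
        gcongr
        refine hd1.trans ?_
        gcongr
      have e5 : C1 * θ1 ^ (m + 2) ≤ C1 * θ ^ m := by gcongr
      have e6 : B / θ ^ 2 * θ ^ (m + 2) = B * θ ^ m := by
        rw [pow_add]; field_simp
      rw [e6, hBdef]
      have e7 : 0 ≤ θ ^ m := by positivity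
      nlinarith
  refine ⟨Δp₀ * (B / θ ^ 2 / γ') + 1, by positivity, θ, ⟨hθpos, hθlt⟩, ?_⟩
  intro α 𝔞 β 𝔟 q h𝔞 hα
  rw [← mul_sub, abs_mul, abs_of_nonneg hΔ0]
  have g1 := hlogb 𝔞 𝔟 (α 0) (β 0) _ (hpi_mem (consF (α 0) 𝔞) fun i => α (i + 1)) _
    (hpi_mem (consF (β 0) 𝔟) fun i => β (i + 1))
  have g2 := div_le_div_of_nonneg_right (hlamd α 𝔞 β 𝔟 q h𝔞 hα) hγ'0.le
  have g3 := mul_le_mul_of_nonneg_left (g1.trans g2) hΔ0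
  refine g3.trans ?_
  have g4 : Δp₀ * (B / θ ^ 2 * θ ^ q / γ') = Δp₀ * (B / θ ^ 2 / γ') * θ ^ q := by ring
  have g5 : 0 ≤ θ ^ q := by positivity
  rw [g4, add_mul]; linarith

end Paper
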